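/- Let M = cQ + εD ∈ 𝔻ℍ[t] be a bounded monic reduced motion polynomial of degree n with monic c ∈ ℝ[t], Q, D ∈ ℍ[t], mrpf(Q) = 1, and ν(M) = c²·ν(Q) = Nⁿ for some irreducible quadratic N ∈ ℝ[t]. Let g ∈ ℝ[t] be the greatest common monic real polynomial divisor of c, Q*·D, and D·Q*. If c·g divides D·D* in ℝ[t], then M admits a factorization into monic linear motion polynomial factors. -/

import Mathlib

open Polynomial DualNumber TrivSqZeroExt

noncomputable section

/-- The real quaternions. -/
abbrev Hq : Type := Quaternion ℝ

/-- The dual quaternions. -/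
abbrev DHq : Type := DualNumber Hq

/-- Conjugation of a dual quaternion: `(p + ε d)* = p* + ε d*`. -/
instance : Star DHq := ⟨fun x => inl (star x.fst) + inr (star x.snd)⟩

/-- Coefficient-wise (quaternion) conjugation of a polynomial. -/
def cstar {R : Type*} [Semiring R] [Star R] (A : R[X]) : R[X] :=
  A.sum fun n a => Polynomial.C (star a) * Polynomial.X ^ n

/-- The embedding `ℝ[t] → ℍ[t]`. -/
def qPoly (f : ℝ[X]) : Hq[X] := f.map (algebraMap ℝ Hq)

/-- The embedding `ℍ[t] → 𝔻ℍ[t]` (primal part). -/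
def dhQ (P : Hq[X]) : DHq[X] := P.map (inlHom Hq Hq)

/-- The embedding `ℝ[t] → 𝔻ℍ[t]`. -/
def dPoly (f : ℝ[X]) : DHq[X] := dhQ (qPoly f)

/-- The dual quaternion polynomial `P + ε D` with primal part `P` and dual part `D`. -/
def mp (P D : Hq[X]) : DHq[X] := dhQ P + Polynomial.C ε * dhQ D

/-- The primal part of a dual quaternion polynomial. -/
def primal (A : DHq[X]) : Hq[X] := A.map (fstHom ℝ Hq Hq).toRingHom

/-- A motion polynomial: a dual quaternion polynomial whose norm polynomial
`ν(M) = M·M*` is a nonzero real polynomial. -/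
def IsMotion (M : DHq[X]) : Prop := ∃ f : ℝ[X], f ≠ 0 ∧ M * cstar M = dPoly f

/-- A real polynomial divides a quaternion polynomial. -/
def RDvdQ (f : ℝ[X]) (A : Hq[X]) : Prop := ∃ B : Hq[X], A = qPoly f * B

/-- A real polynomial divides a dual quaternion polynomial. -/
def RDvdD (f : ℝ[X]) (A : DHq[X]) : Prop := ∃ B : DHq[X], A = dPoly f * B

/-- `g` is the greatest common monic real polynomial divisor of a quaternion polynomial `A`
(with itself), i.e. `g = mrpf A`. -/
def IsMrpfQ (g : ℝ[X]) (A : Hq[X]) : Prop :=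
  g.Monic ∧ RDvdQ g A ∧ ∀ f : ℝ[X], f.Monic → RDvdQ f A → f ∣ g

/-- `g` is the greatest common monic real polynomial divisor of `c ∈ ℝ[t]` and a quaternion
polynomial `A`, i.e. `g = mrpf(c, A)`. -/
def IsMrpf2 (g : ℝ[X]) (c : ℝ[X]) (A : Hq[X]) : Prop :=
  g.Monic ∧ g ∣ c ∧ RDvdQ g A ∧
    ∀ f : ℝ[X], f.Monic → f ∣ c → RDvdQ f A → f ∣ g

/-- `g` is the greatest common monic real polynomial divisor of `c ∈ ℝ[t]` and two quaternion
polynomials `A` and `B`, i.e. `g = mrpf(c, A, B)`. -/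
def IsMrpf3 (g : ℝ[X]) (c : ℝ[X]) (A B : Hq[X]) : Prop :=
  g.Monic ∧ g ∣ c ∧ RDvdQ g A ∧ RDvdQ g B ∧
    ∀ f : ℝ[X], f.Monic → f ∣ c → RDvdQ f A → RDvdQ f B → f ∣ g

/-- A quaternion polynomial is reduced: `mrpf = 1`, i.e. it has only constant real
polynomial factors. -/
def ReducedQ (A : Hq[X]) : Prop := ∀ f : ℝ[X], f.Monic → RDvdQ f A → f = 1

/-- A dual quaternion polynomial is reduced: `mrpf = 1`. -/
def ReducedD (A : DHq[X]) : Prop := ∀ f : ℝ[X], f.Monic → RDvdD f A → f = 1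

/-- Boundedness of a (monic reduced) motion polynomial: `mrpf` of its primal part has
no real root, equivalently no linear real polynomial `t - a` divides the primal part. -/
def BoundedD (M : DHq[X]) : Prop :=
  ∀ a : ℝ, ¬ RDvdQ (Polynomial.X - Polynomial.C a) (primal M)

/-- A generic motion polynomial: monic, a motion polynomial, with `mrpf` of the primal
part equal to `1`. -/
def GenericD (M : DHq[X]) : Prop :=
  M.Monic ∧ IsMotion M ∧ ReducedQ (primal M)

/-- The monic linear dual quaternion polynomial `t - p - ε d`. -/
def lin (p d : Hq) : DHq[X] := mp (Polynomial.X - Polynomial.C p) (-Polynomial.C d)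

/-- `M` admits a factorization into monic linear motion polynomial factors. -/
def HasLinFact (M : DHq[X]) : Prop :=
  ∃ L : List DHq, (∀ h ∈ L, IsMotion (Polynomial.X - Polynomial.C h)) ∧
    M = (L.map fun h => Polynomial.X - Polynomial.C h).prod

end

noncomputable section

theorem coeff_cstar {R : Type*} [Semiring R] [Star R] (h0 : star (0 : R) = 0) (A : R[X]) (n : ℕ) :
    (cstar A).coeff n = star (A.coeff n) := by
  unfold cstar
  rw [Polynomial.sum_def, Polynomial.finsetSum_coeff]
  simp only [Polynomial.coeff_C_mul, Polynomial.coeff_X_pow, mul_ite, mul_one, mul_zero]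
  rw [Finset.sum_ite_eq]
  split_ifs with h
  · rfl
  · rw [Polynomial.notMem_support_iff.1 h, h0]

theorem cq (A : Hq[X]) (n : ℕ) : (cstar A).coeff n = star (A.coeff n) :=
  coeff_cstar (star_zero _) A n

theorem cs_mul (A B : Hq[X]) : cstar (A * B) = cstar B * cstar A := by
  ext1 n
  rw [cq, Polynomial.coeff_mul, Polynomial.coeff_mul, star_sum,
    ← Finset.Nat.sum_antidiagonal_swap]
  refine Finset.sum_congr rfl fun x _ => ?_
  simp [cq]

theorem cs_add (A B : Hq[X]) : cstar (A + B) = cstar A + cstar B := by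
  ext1 n; simp [cq]
theorem cs_sub (A B : Hq[X]) : cstar (A - B) = cstar A - cstar B := by
  ext1 n; simp [cq]
theorem cs_neg (A : Hq[X]) : cstar (-A) = -cstar A := by
  ext1 n; simp [cq]
theorem cs_cs (A : Hq[X]) : cstar (cstar A) = A := by
  ext1 n; simp [cq]
theorem cs_C (a : Hq) : cstar (C a) = C (star a) := by
  ext1 n; rw [cq, coeff_C, coeff_C]; split_ifs <;> simp
theorem cs_zero : cstar (0 : Hq[X]) = 0 := by
  ext1 n; simp [cq]
theorem cs_one : cstar (1 : Hq[X]) = 1 := by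
  rw [← C_1, cs_C, star_one]
theorem cs_X : cstar (X : Hq[X]) = X := by
  ext1 n; rw [cq, coeff_X]; split_ifs <;> simp
theorem cs_q (f : ℝ[X]) : cstar (qPoly f) = qPoly f := by
  ext1 n; simp [cq, qPoly]
theorem cs_inj {A B : Hq[X]} (h : cstar A = cstar B) : A = B := by
  rw [← cs_cs A, h, cs_cs]
theorem cs_degree (A : Hq[X]) : (cstar A).degree = A.degree := by
  apply le_antisymm
  · rw [degree_le_iff_coeff_zero]; intro m hm; rw [cq, coeff_eq_zero_of_degree_lt hm, star_zero]
  · rw [degree_le_iff_coeff_zero]; intro m hm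
    have := coeff_eq_zero_of_degree_lt hm
    rw [cq] at this; simpa using this
theorem cs_natDegree (A : Hq[X]) : (cstar A).natDegree = A.natDegree :=
  natDegree_eq_of_degree_eq (cs_degree A)
theorem cs_monic {A : Hq[X]} (h : A.Monic) : (cstar A).Monic := by
  unfold Monic leadingCoeff at *
  rw [cs_natDegree, cq, h, star_one]

theorem q_comm (f : ℝ[X]) (A : Hq[X]) : qPoly f * A = A * qPoly f := by
  ext1 n
  rw [coeff_mul, coeff_mul, ← Finset.Nat.sum_antidiagonal_swap]
  refine Finset.sum_congr rfl fun x _ => ?_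
  simp only [qPoly, coeff_map, Prod.fst_swap, Prod.snd_swap]
  exact Algebra.commutes _ _

theorem q_left (f : ℝ[X]) (A B : Hq[X]) : A * (qPoly f * B) = qPoly f * (A * B) := by
  rw [← mul_assoc, ← q_comm, mul_assoc]

theorem q_mul (f g : ℝ[X]) : qPoly (f * g) = qPoly f * qPoly g := by simp [qPoly]
theorem q_pow (f : ℝ[X]) (k : ℕ) : qPoly (f ^ k) = qPoly f ^ k := by simp [qPoly]
theorem q_inj {f g : ℝ[X]} (h : qPoly f = qPoly g) : f = g :=
  Polynomial.map_injective _ (algebraMap ℝ Hq).injective h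
theorem q_real {A : Hq[X]} (h : cstar A = A) : ∃ f, A = qPoly f := by
  refine ⟨∑ i ∈ A.support, monomial i (A.coeff i).re, ?_⟩
  ext1 n
  have h1 : star (A.coeff n) = A.coeff n := by rw [← cq, h]
  have h2 : A.coeff n = (((A.coeff n).re : ℝ) : Hq) := Quaternion.star_eq_self.1 h1
  simp only [qPoly, coeff_map, finsetSum_coeff, coeff_monomial]
  rw [Finset.sum_ite_eq']
  split_ifs with hn
  · exact h2
  · rw [notMem_support_iff.1 hn]; simp
theorem self_real (A : Hq[X]) : ∃ f, A * cstar A = qPoly f :=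
  q_real (by rw [cs_mul, cs_cs])
theorem self_comm (A : Hq[X]) : cstar A * A = A * cstar A := by
  by_cases h : A = 0
  · simp [h, cs_zero]
  obtain ⟨f, hf⟩ := self_real A
  apply mul_left_cancel₀ h
  rw [← mul_assoc, hf, q_comm]
theorem q_dvd {A B : Hq[X]} (f : ℝ[X]) (h : A ∣ B) : A ∣ B * qPoly f := h.mul_right _
theorem q_monic {f : ℝ[X]} (h : f.Monic) : (qPoly f).Monic := h.map _
theorem q_natDegree (f : ℝ[X]) : (qPoly f).natDegree = f.natDegree :=
  natDegree_map_eq_of_injective (algebraMap ℝ Hq).injective f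
/-- divisibility by central elements -/
theorem q_dvd_left {f : ℝ[X]} {A : Hq[X]} (B : Hq[X]) (h : qPoly f ∣ A) : qPoly f ∣ B * A := by
  obtain ⟨c, rfl⟩ := h
  exact ⟨B * c, q_left _ _ _⟩
theorem q_dvd_cs {f : ℝ[X]} {A : Hq[X]} (h : qPoly f ∣ A) : qPoly f ∣ cstar A := by
  obtain ⟨c, rfl⟩ := h
  exact ⟨cstar c, by rw [cs_mul, cs_q, q_comm]⟩
theorem q_dvd_cs' {f : ℝ[X]} {A : Hq[X]} : qPoly f ∣ cstar A ↔ qPoly f ∣ A :=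
  ⟨fun h => cs_cs A ▸ q_dvd_cs h, q_dvd_cs⟩

inductive Fct : Hq[X] → Hq[X] → Prop
  | one : Fct 1 0
  | snoc (P D : Hq[X]) (p d : Hq) (h : Fct P D) (h1 : star d = -d) (h2 : p * d = d * star p) :
      Fct (P * (X - C p)) (D * (X - C p) - P * C d)

theorem Fct.cons (P D : Hq[X]) (p d : Hq) (h : Fct P D) (h1 : star d = -d)
    (h2 : p * d = d * star p) : Fct ((X - C p) * P) ((X - C p) * D - C d * P) := by
  induction h with
  | one =>
    have := Fct.snoc 1 0 p d Fct.one h1 h2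
    simpa using this
  | snoc P D p' d' h h1' h2' ih =>
    have := Fct.snoc _ _ p' d' ih h1' h2'
    convert this using 1 <;> noncomm_ring

theorem comm_d' {p d : Hq} (h2 : p * d = d * star p) : star p * d = d * p := by
  have h := Quaternion.star_eq_two_re_sub p
  have h4 := Quaternion.coe_commutes (2 * p.re) d
  generalize ((2 * p.re : ℝ) : Hq) = x at h h4
  have h3 : p = x - star p := by rw [h]; abel
  calc star p * d = x * d - p * d := by rw [h, sub_mul]
    _ = d * (x - star p) := by rw [h4, h2, mul_sub]
    _ = d * p := by rw [← h3]

theorem Fct.cs {P D : Hq[X]} (h : Fct P D) : Fct (cstar P) (cstar D) := by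
  induction h with
  | one => rw [cs_one, cs_zero]; exact Fct.one
  | snoc P D p d h h1 h2 ih =>
    have := Fct.cons _ _ (star p) (star d) ih (by rw [h1]; simp [h1]) (by
      rw [h1, star_star, mul_neg, neg_mul, comm_d' h2])
    convert this using 1 <;> simp [cs_mul, cs_sub, cs_C, cs_X]

theorem mp_coeff (P D : Hq[X]) (n : ℕ) : (mp P D).coeff n = inl (P.coeff n) + inr (D.coeff n) := by
  simp only [mp, dhQ, coeff_add, coeff_map, coeff_C_mul]
  ext <;> simp
theorem mp_mul (P D P' D' : Hq[X]) : mp P D * mp P' D' = mp (P * P') (P * D' + D * P') := by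
  have hc : ∀ A : DHq[X], A * C ε = C ε * A := by
    intro A
    ext1 n
    rw [coeff_mul_C, coeff_C_mul]
    ext <;> simp
  have he : (C ε * C ε : DHq[X]) = 0 := by rw [← C_mul]; simp
  simp only [mp, dhQ, Polynomial.map_add, Polynomial.map_mul]
  generalize P.map (inlHom Hq Hq) = p
  generalize P'.map (inlHom Hq Hq) = p'
  generalize D.map (inlHom Hq Hq) = d
  generalize D'.map (inlHom Hq Hq) = d'
  have e1 : p * (C ε * d') = C ε * (p * d') := by rw [← mul_assoc, hc, mul_assoc]
  have e2 : C ε * d * (C ε * d') = 0 := by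
    rw [mul_assoc, ← mul_assoc d, hc, mul_assoc, ← mul_assoc, he, zero_mul]
  rw [add_mul, mul_add, mul_add, e1, e2, mul_add, mul_assoc]; abel
theorem mp_inj {P D P' D' : Hq[X]} (h : mp P D = mp P' D') : P = P' ∧ D = D' := by
  constructor
  · ext1 n
    have := congrArg (fun A => (A.coeff n).fst) h
    simpa [mp_coeff] using this
  · ext1 n
    have := congrArg (fun A => (A.coeff n).snd) h
    simpa [mp_coeff] using this
theorem mp_cs (P D : Hq[X]) : cstar (mp P D) = mp (cstar P) (cstar D) := by
  have h0 : star (0 : DHq) = 0 := by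
    show inl (star (0 : DHq).fst) + inr (star (0 : DHq).snd) = 0
    simp
  ext1 n
  rw [coeff_cstar h0, mp_coeff, mp_coeff, cq, cq]
  show inl (star _) + inr (star _) = _
  simp
theorem dPoly_eq (f : ℝ[X]) : dPoly f = mp (qPoly f) 0 := by
  simp [dPoly, mp, dhQ]

theorem lin_eq (p d : Hq) : X - C (inl p + inr d : DHq) = mp (X - C p) (-C d) := by
  ext1 n
  rw [mp_coeff]
  simp only [coeff_sub, coeff_neg, coeff_X, coeff_C]
  ext <;> split_ifs <;> simp

theorem comm_d {p d : Hq} (h2 : p * d = d * star p) : 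
    (X - C p) * C d = C d * (X - C (star p)) := by
  rw [sub_mul, mul_sub, ← C_mul, ← C_mul, h2, X_mul_C]

theorem Fct.has {P D : Hq[X]} (h : Fct P D) : HasLinFact (mp P D) := by
  induction h with
  | one => exact ⟨[], by simp, by simp [mp, dhQ]⟩
  | snoc P D p d h h1 h2 ih =>
    obtain ⟨L, hL, e⟩ := ih
    refine ⟨L ++ [inl p + inr d], ?_, ?_⟩
    · intro x hx
      rw [List.mem_append] at hx
      rcases hx with hx | hx
      · exact hL x hx
      · rw [List.mem_singleton] at hx
        subst hx
        rw [lin_eq]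
        obtain ⟨f, hf⟩ := self_real (X - C p)
        refine ⟨f, ?_, ?_⟩
        · rintro rfl
          have : (X - C p) * cstar (X - C p) = 0 := by rw [hf]; simp [qPoly]
          have h3 := ((monic_X_sub_C p).mul (cs_monic (monic_X_sub_C p))).ne_zero
          exact h3 this
        · rw [mp_cs, mp_mul, hf, dPoly_eq]
          congr 1
          simp only [cs_neg, cs_C, cs_sub, cs_X, h1, C_neg, neg_neg]
          rw [comm_d h2]; noncomm_ring
    · rw [List.map_append, List.prod_append, ← e]
      simp only [List.map_cons, List.map_nil, List.prod_cons, List.prod_nil, mul_one]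
      rw [lin_eq, mp_mul]
      congr 1
      noncomm_ring
end
noncomputable section

theorem ldiv (A : Hq[X]) (p : Hq) : ∃ B x, A = (X - C p) * B + C x := by
  have h := modByMonic_add_div A (X - C p)
  have hd := degree_modByMonic_lt A (monic_X_sub_C p)
  rw [degree_X_sub_C] at hd
  have h0 : (A %ₘ (X - C p)).degree ≤ 0 := by
    by_contra hh
    push Not at hh
    have : (1 : WithBot ℕ) ≤ (A %ₘ (X - C p)).degree := Order.succ_le_of_lt hh
    exact absurd hd (not_lt.2 this)
  refine ⟨A /ₘ (X - C p), (A %ₘ (X - C p)).coeff 0, ?_⟩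
  rw [← eq_C_of_degree_le_zero h0, add_comm, h]

theorem rdiv (A : Hq[X]) (p : Hq) : ∃ B x, A = B * (X - C p) + C x := by
  obtain ⟨B, x, h⟩ := ldiv (cstar A) (star p)
  refine ⟨cstar B, star x, cs_inj ?_⟩
  rw [h]
  simp [cs_add, cs_mul, cs_sub, cs_C, cs_X, cs_cs]

theorem cs_lin (p : Hq) : cstar (X - C p) = X - C (star p) := by
  simp [cs_sub, cs_C, cs_X]

theorem C_ne {x : Hq} (h : x ≠ 0) : C x * C x⁻¹ = 1 ∧ C x⁻¹ * C x = 1 := by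
  rw [← C_mul, ← C_mul, mul_inv_cancel₀ h, inv_mul_cancel₀ h]; simp

/-- zero divisors mod `Z` -/
theorem prime_like {N : ℝ[X]} {Q W : Hq[X]} {p : Hq}
    (h1 : ¬ qPoly N ∣ Q) (h2 : qPoly N ∣ Q * (X - C p)) (h3 : qPoly N ∣ Q * W) :
    ∃ Y, W = (X - C p) * Y := by
  obtain ⟨Y, x, h⟩ := ldiv W p
  refine ⟨Y, ?_⟩
  by_cases hx : x = 0
  · rw [h, hx, C_0, add_zero]
  exfalso
  rw [h, mul_add, ← mul_assoc] at h3
  have h4 := (dvd_add_right (h2.mul_right Y)).1 h3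
  have h5 := h4.mul_right (C x⁻¹)
  rw [mul_assoc, (C_ne hx).1, mul_one] at h5
  exact h1 h5

theorem lemL {N : ℝ[X]} (hN : N.Monic) (h2 : N.natDegree = 2) {D : Hq[X]}
    (h : ¬ qPoly N ∣ D) (hd : qPoly N ∣ D * cstar D) :
    ∃ p E, (X - C p) * (X - C (star p)) = qPoly N ∧ D = E * (X - C p) := by
  have hZ := q_monic hN
  have hZd : (qPoly N).natDegree = 2 := by rw [q_natDegree, h2]
  have hZd' : (qPoly N).degree = 2 := by rw [degree_eq_natDegree hZ.ne_zero, hZd]; rfl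
  have e := modByMonic_add_div D (qPoly N)
  have hlt := degree_modByMonic_lt D hZ
  set R := D %ₘ qPoly N with hR
  set D0 := D /ₘ qPoly N
  have hR0 : R ≠ 0 := by
    intro h0; rw [h0, zero_add] at e; exact h ⟨_, e.symm⟩
  have hRR : qPoly N ∣ R * cstar R := by
    have : R * cstar R = D * cstar D - qPoly N * (D0 * cstar D + R * cstar D0) := by
      have e' := congrArg cstar e
      rw [cs_add, cs_mul, cs_q, ← q_comm] at e'
      have e1 : R = D - qPoly N * D0 := by rw [← e]; abel
      have e2 : cstar R = cstar D - qPoly N * cstar D0 := by rw [← e']; abel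
      calc R * cstar R = R * (cstar D - qPoly N * cstar D0) := by rw [e2]
        _ = R * cstar D - qPoly N * (R * cstar D0) := by rw [mul_sub, q_left]
        _ = (D - qPoly N * D0) * cstar D - qPoly N * (R * cstar D0) := by rw [← e1]
        _ = _ := by noncomm_ring
    rw [this]
    exact dvd_sub hd (Dvd.intro _ rfl)
  have hRd : R.degree ≤ 1 := by
    rw [hZd'] at hlt
    exact Order.le_of_lt_succ hlt
  have hRn : R.natDegree ≤ 1 := natDegree_le_of_degree_le hRd
  obtain ⟨a, b, hab⟩ : ∃ a b, R = C a * X + C b := ⟨_, _, eq_X_add_C_of_degree_le_one hRd⟩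
  obtain ⟨S, hS⟩ := hRR
  have hRR0 : R * cstar R ≠ 0 := by
    intro h0
    rcases mul_eq_zero.1 h0 with h0 | h0
    · exact hR0 h0
    · apply hR0; apply cs_inj; rw [h0, cs_zero]
  have hS0 : S ≠ 0 := by rintro rfl; rw [mul_zero] at hS; exact hRR0 hS
  have hdeg := congrArg natDegree hS
  rw [natDegree_mul hZ.ne_zero hS0, natDegree_mul (left_ne_zero_of_mul hRR0)
    (right_ne_zero_of_mul hRR0), cs_natDegree, hZd] at hdeg
  have hSd : S.natDegree = 0 := by omega
  have hRd1 : R.natDegree = 1 := by omega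
  have ha : a ≠ 0 := by
    rintro rfl
    rw [hab] at hRd1
    simp at hRd1
  obtain ⟨s, rfl⟩ : ∃ s, S = C s := ⟨_, eq_C_of_natDegree_eq_zero hSd⟩
  obtain ⟨p, hp⟩ : ∃ p, p = -(a⁻¹ * b) := ⟨_, rfl⟩
  have hRp : R = C a * (X - C p) := by
    rw [hab, mul_sub, ← C_mul, hp, mul_neg, mul_inv_cancel_left₀ ha, C_neg, sub_neg_eq_add]
  rw [hRp, cs_mul, cs_C, cs_lin] at hS
  have hS1 : C a * ((X - C p) * (X - C (star p))) * C (star a) = qPoly N * C s := by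
    rw [← hS]; simp only [mul_assoc]
  have ha' : star a ≠ 0 := by simpa using ha
  have hS2 : (X - C p) * (X - C (star p)) = qPoly N * C (a⁻¹ * s * (star a)⁻¹) := by
    calc (X - C p) * (X - C (star p)) = C a⁻¹ * (C a * ((X - C p) * (X - C (star p))) * C (star a))
          * C (star a)⁻¹ := by
          rw [mul_assoc (C a), ← mul_assoc (C a⁻¹), (C_ne ha).2, one_mul, mul_assoc, (C_ne ha').1,
            mul_one]
      _ = _ := by rw [hS1, C_mul, C_mul, q_left]; simp only [mul_assoc]
  have hmon : ((X - C p) * (X - C (star p))).Monic := (monic_X_sub_C _).mul (monic_X_sub_C _)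
  have hc : a⁻¹ * s * (star a)⁻¹ = 1 := by
    rw [hS2] at hmon
    have := hmon.leadingCoeff
    rwa [leadingCoeff_mul, hZ.leadingCoeff, one_mul, leadingCoeff_C] at this
  rw [hc, C_1, mul_one] at hS2
  refine ⟨p, D0 * (X - C (star p)) + C a, hS2, ?_⟩
  have hc2 : (X - C (star p)) * (X - C p) = qPoly N := by
    rw [← hS2, ← cs_lin, self_comm]
  rw [add_mul, mul_assoc, hc2, ← hRp, ← q_comm, add_comm, e]

theorem exists_q (a b c d : ℝ) : ∃ q : Hq, q.re = a ∧ q.imI = b ∧ q.imJ = c ∧ q.imK = d :=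
  ⟨⟨a, b, c, d⟩, rfl, rfl, rfl, rfl⟩

theorem exists_d (p : Hq) : ∃ d : Hq, d ≠ 0 ∧ star d = -d ∧ p * d = d * star p := by
  by_cases h : p.imI = 0 ∧ p.imJ = 0
  · obtain ⟨d, d0, d1, d2, d3⟩ := exists_q 0 1 0 0
    refine ⟨d, ?_, ?_, ?_⟩
    · rintro rfl
      have : (0 : ℝ) = 1 := d1
      norm_num at this
    · apply Quaternion.ext <;> simp [d0, d1, d2, d3]
    · apply Quaternion.ext <;> simp [h.1, h.2, d0, d1, d2, d3]
  · obtain ⟨d, d0, d1, d2, d3⟩ := exists_q 0 p.imJ (-p.imI) 0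
    refine ⟨d, ?_, ?_, ?_⟩
    · rintro rfl
      apply h
      have e1 : (0 : ℝ) = p.imJ := d1
      have e2 : (0 : ℝ) = - p.imI := d2
      exact ⟨by linarith, e1.symm⟩
    · apply Quaternion.ext <;> simp [d0, d1, d2, d3]
    · apply Quaternion.ext <;> simp [d0, d1, d2, d3] <;> ring

theorem exists_root {N : ℝ[X]} (hN : N.Monic) (h2 : N.natDegree = 2) (hi : Irreducible N) :
    ∃ p : Hq, (X - C p) * (X - C (star p)) = qPoly N := by
  have hN' : N = X ^ 2 + C (N.coeff 1) * X + C (N.coeff 0) := by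
    conv_lhs => rw [hN.as_sum, h2]
    simp [Finset.sum_range_succ]; ring
  generalize N.coeff 1 = b at hN'
  generalize N.coeff 0 = c at hN'
  have hpos : 0 ≤ c - b ^ 2 / 4 := by
    by_contra hneg
    push Not at hneg
    obtain ⟨s, hs⟩ : ∃ s, s = Real.sqrt (b ^ 2 / 4 - c) := ⟨_, rfl⟩
    have hs2 : s ^ 2 = b ^ 2 / 4 - c := by rw [hs]; exact Real.sq_sqrt (by linarith)
    have hroot : N.IsRoot (-b / 2 + s) := by
      rw [hN']; simp; nlinarith
    have := degree_eq_one_of_irreducible_of_root hi hroot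
    rw [degree_eq_natDegree hN.ne_zero, h2] at this
    norm_num at this
  obtain ⟨s, hs⟩ : ∃ s, s = Real.sqrt (c - b ^ 2 / 4) := ⟨_, rfl⟩
  have hs2 : s ^ 2 = c - b ^ 2 / 4 := by rw [hs]; exact Real.sq_sqrt hpos
  obtain ⟨p, p0, p1, p2, p3⟩ := exists_q (-b / 2) s 0 0
  refine ⟨p, ?_⟩
  have e1 : p + star p = ((-b : ℝ) : Hq) := by
    apply Quaternion.ext <;> simp [p0, p1, p2, p3]
  have e2 : p * star p = (c : Hq) := by
    apply Quaternion.ext <;> simp [p0, p1, p2, p3] <;> nlinarith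
  calc (X - C p) * (X - C (star p)) = X ^ 2 - C (p + star p) * X + C (p * star p) := by
        rw [C_add, C_mul, sub_mul, mul_sub, mul_sub, X_mul_C, add_mul, pow_two]; abel
    _ = qPoly N := by rw [e1, e2, hN', qPoly, ← Quaternion.algebraMap_def]; simp
end
noncomputable section

theorem pd_left {N : ℝ[X]} {k : ℕ} {A : Hq[X]} (B : Hq[X]) (h : qPoly N ^ k ∣ A) :
    qPoly N ^ k ∣ B * A := by
  rw [← q_pow] at *; exact q_dvd_left B h
theorem pd_cs {N : ℝ[X]} {k : ℕ} {A : Hq[X]} : qPoly N ^ k ∣ cstar A ↔ qPoly N ^ k ∣ A := by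
  rw [← q_pow]; exact q_dvd_cs'
theorem pd_cancel {N : ℝ[X]} (hN : N.Monic) {k : ℕ} {A : Hq[X]} :
    qPoly N ^ (k + 1) ∣ qPoly N * A ↔ qPoly N ^ k ∣ A := by
  constructor
  · rintro ⟨B, hB⟩
    refine ⟨B, mul_left_cancel₀ (q_monic hN).ne_zero ?_⟩
    rw [hB, pow_succ', mul_assoc]
  · rintro ⟨B, rfl⟩
    exact ⟨B, by rw [pow_succ', mul_assoc]⟩

theorem H1 {Q : Hq[X]} {p : Hq} (h : (Q * (X - C p)).Monic) : Q.Monic := by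
  unfold Monic at *
  rwa [leadingCoeff_mul, leadingCoeff_X_sub_C, mul_one] at h
theorem H2 {E : Hq[X]} {p : Hq} {k : ℕ} (h : (E * (X - C p)).degree < ((k + 1 : ℕ) : WithBot ℕ)) :
    E.degree < (k : WithBot ℕ) := by
  rw [degree_mul, degree_X_sub_C, Nat.cast_add, Nat.cast_one] at h
  by_contra hh
  push Not at hh
  exact absurd h (not_lt.2 (add_le_add_left hh 1))
theorem H3 {N : ℝ[X]} (hN : N.Monic) (h2 : N.natDegree = 2) {Q : Hq[X]} {k : ℕ}
    (h : Q * cstar Q = qPoly N ^ k) (hQ : Q.Monic) : Q.natDegree = k := by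
  have := congrArg natDegree h
  rw [hQ.natDegree_mul (cs_monic hQ), cs_natDegree, (q_monic hN).natDegree_pow, q_natDegree, h2] at this
  omega
theorem H5 {N : ℝ[X]} {p : Hq} (h : (X - C p) * (X - C (star p)) = qPoly N) :
    (X - C (star p)) * (X - C p) = qPoly N := by
  rw [← h, ← cs_lin, self_comm]
theorem H6 {N : ℝ[X]} {p : Hq} (h : (X - C p) * (X - C (star p)) = qPoly N) (A B : Hq[X]) :
    (A * (X - C p)) * cstar (B * (X - C p)) = qPoly N * (A * cstar B) := by
  rw [cs_mul, cs_lin, mul_assoc, ← mul_assoc (X - C p), h, q_left]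
theorem H4 {N w : ℝ[X]} (hN : N.Monic) {p d : Hq} (h : (X - C p) * (X - C (star p)) = qPoly N)
    (h1 : star d = -d) (h2 : p * d = d * star p) {Q D : Hq[X]}
    (hm : (Q * (X - C p)) * cstar (D * (X - C p) - qPoly w * Q * C d) +
      (D * (X - C p) - qPoly w * Q * C d) * cstar (Q * (X - C p)) = 0) :
    Q * cstar D + D * cstar Q = 0 := by
  apply mul_left_cancel₀ (q_monic hN).ne_zero
  rw [mul_zero, mul_add, ← H6 h, ← H6 h, ← hm, cs_sub, mul_sub (Q * (X - C p)) (cstar _), sub_mul (D * (X - C p))]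
  have : Q * (X - C p) * cstar (qPoly w * Q * C d) +
    qPoly w * Q * C d * cstar (Q * (X - C p)) = 0 := by
    rw [cs_mul, cs_mul, cs_q, cs_C, h1, ← q_comm, q_left, q_left, cs_mul, cs_lin, mul_assoc,
      mul_assoc (qPoly w), mul_assoc (qPoly w), ← mul_add, ← mul_assoc (X - C p), C_neg, mul_neg,
      comm_d h2]
    noncomm_ring
  have e := eq_neg_of_add_eq_zero_left this
  rw [e, sub_neg_eq_add]
  generalize qPoly w * Q * C d * cstar (Q * (X - C p)) = U
  generalize Q * (X - C p) * cstar (D * (X - C p)) = V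
  generalize D * (X - C p) * cstar (Q * (X - C p)) = W
  abel

theorem generic {N : ℝ[X]} (hN : N.Monic) (h2 : N.natDegree = 2) : ∀ (k : ℕ) (Q D : Hq[X]),
    Q.Monic → Q * cstar Q = qPoly N ^ k → ¬ qPoly N ∣ Q → D.degree < (k : WithBot ℕ) →
    Q * cstar D + D * cstar Q = 0 → Fct Q D := by
  intro k
  induction k with
  | zero =>
    intro Q D hQ hn hz hd hm
    have := H3 hN h2 hn hQ
    rw [(Monic.natDegree_eq_zero hQ).1 this]
    have : D = 0 := by
      rw [← degree_eq_bot]; exact Nat.WithBot.lt_zero_iff.1 hd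
    rw [this]; exact Fct.one
  | succ k ih =>
    intro Q D hQ hn hz hd hm
    have hk := H3 hN h2 hn hQ
    obtain ⟨p, Q1, hp, rfl⟩ := lemL hN h2 hz (by rw [hn]; exact dvd_pow_self _ (by omega))
    have hp' := H5 hp
    obtain ⟨A, q, hA⟩ := rdiv Q1 (star p)
    have hq : q ≠ 0 := by
      rintro rfl
      apply hz
      rw [hA, C_0, add_zero, mul_assoc, hp', ← q_comm]
      exact dvd_mul_right _ _
    obtain ⟨D0, r, hD⟩ := rdiv D p
    have hQe : Q1 * (X - C p) = qPoly N * A + C q * (X - C p) := by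
      rw [hA, add_mul, mul_assoc, hp', q_comm]
    have hT : qPoly N ∣ C q * (X - C p) * C (star r) + C r * (X - C (star p)) * C (star q) := by
      have e : C q * (X - C p) * cstar D =
          qPoly N * (C q * cstar D0) + C q * (X - C p) * C (star r) := by
        rw [hD, cs_add, cs_mul, cs_lin, cs_C, mul_add, mul_assoc, ← mul_assoc (X - C p), hp, q_left]
      have e' := congrArg cstar e
      simp only [cs_add, cs_mul, cs_C, cs_q, cs_cs, cs_lin, star_star] at e'
      have e3 : C q * (X - C p) * C (star r) + C r * (X - C (star p)) * C (star q) =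
        qPoly N * (-(A * cstar D) - D * cstar A - C q * cstar D0 - D0 * C (star q)) := by
        rw [hQe, cs_add, cs_mul, cs_mul, cs_lin, cs_C, cs_q, add_mul, mul_add, e, e', ← q_comm,
          ← q_comm, q_left] at hm
        rw [← sub_eq_zero, ← hm]
        noncomm_ring
      exact ⟨_, e3⟩
    have hT2 : C q * (X - C p) * C (star r) + C r * (X - C (star p)) * C (star q) =
        C (q * star r + r * star q) * X + C (-(q * p * star r + r * star p * star q)) := by
      simp only [C_add, C_mul, C_neg]
      rw [add_mul, mul_assoc (C q) _ X, mul_assoc (C r) _ X, ← X_mul_C, ← X_mul_C]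
      noncomm_ring
    have hT0 : C (q * star r + r * star q) * X + C (-(q * p * star r + r * star p * star q))
        = (0 : Hq[X]) := by
      rw [hT2] at hT
      by_contra h0
      refine (q_monic hN).not_dvd_of_degree_lt h0 ?_ hT
      refine lt_of_le_of_lt degree_linear_le ?_
      rw [degree_eq_natDegree (q_monic hN).ne_zero, q_natDegree, h2]
      norm_num
    have hu : q * star r + r * star q = 0 := by
      have := congrArg (fun P => coeff P 1) hT0
      simpa [coeff_C] using this
    have hv : q * p * star r + r * star p * star q = 0 := by
      have := congrArg (fun P => coeff P 0) hT0
      simp only [coeff_add, coeff_mul_X_zero, coeff_C_zero, zero_add, coeff_zero, neg_eq_zero] at this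
      exact this
    obtain ⟨d, hd0⟩ : ∃ d, d = -(q⁻¹ * r) := ⟨_, rfl⟩
    have hqd : r = -(q * d) := by rw [hd0, mul_neg, mul_inv_cancel_left₀ hq, neg_neg]
    have hq' : star q ≠ 0 := by simpa using hq
    have hd1 : star d = -d := by
      have : q * (star d + d) * star q = 0 := by
        rw [hqd] at hu
        simp only [star_neg, star_mul] at hu
        rw [← neg_eq_zero, ← hu]; noncomm_ring
      rcases mul_eq_zero.1 this with h | h
      · rcases mul_eq_zero.1 h with h | h
        · exact absurd h hq
        · exact eq_neg_of_add_eq_zero_left h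
      · exact absurd h hq'
    have hd2 : p * d = d * star p := by
      have : q * (p * d - d * star p) * star q = 0 := by
        rw [hqd] at hv
        simp only [star_neg, star_mul, hd1] at hv
        rw [← hv]; noncomm_ring
      rcases mul_eq_zero.1 this with h | h
      · rcases mul_eq_zero.1 h with h | h
        · exact absurd h hq
        · exact sub_eq_zero.1 h
      · exact absurd h hq'
    have hc : (X - C (star p)) * C d = C d * (X - C p) := by
      have := comm_d (p := star p) (d := d) (by rw [star_star]; exact comm_d' hd2)
      rwa [star_star] at this
    have hQd : Q1 * C d = A * C d * (X - C p) - C r := by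
      rw [hA, add_mul, mul_assoc, hc, hqd, C_neg, C_mul]; noncomm_ring
    have hDe : D = (D0 + A * C d) * (X - C p) - Q1 * C d := by
      rw [hQd, add_mul, hD]; abel
    have hQ1 := H1 hQ
    have hn1 : Q1 * cstar Q1 = qPoly N ^ k := by
      apply mul_left_cancel₀ (q_monic hN).ne_zero
      rw [← H6 hp, hn, pow_succ']
    have hk1 := H3 hN h2 hn1 hQ1
    have hdeg : (D0 + A * C d).degree < (k : WithBot ℕ) := by
      apply H2 (p := p)
      have : (D0 + A * C d) * (X - C p) = D + Q1 * C d := by rw [hDe]; abel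
      rw [this]
      refine lt_of_le_of_lt (degree_add_le _ _) (max_lt hd ?_)
      refine lt_of_le_of_lt (degree_mul_le _ _) ?_
      rw [degree_eq_natDegree hQ1.ne_zero, hk1]
      refine lt_of_le_of_lt (add_le_add_right degree_C_le _) ?_
      rw [add_zero]; exact_mod_cast Nat.lt_succ_self k
    have hm1 : Q1 * cstar (D0 + A * C d) + (D0 + A * C d) * cstar Q1 = 0 := by
      apply H4 (w := 1) hN hp hd1 hd2
      rw [show qPoly 1 = 1 by simp [qPoly], one_mul, ← hDe, hm]
    rw [hDe]
    exact Fct.snoc _ _ _ _ (ih _ _ hQ1 hn1 (fun h => hz (h.mul_right _)) hdeg hm1) hd1 hd2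
end
noncomputable section

def MainP (N : ℝ[X]) (n : ℕ) : Prop := ∀ (m k j : ℕ) (Q D : Hq[X]), 2 * m + k = n →
  Q.Monic → Q * cstar Q = qPoly N ^ k → ¬ qPoly N ∣ Q → D.degree < (n : WithBot ℕ) →
  Q * cstar D + D * cstar Q = 0 → j ≤ m → qPoly N ^ (m + j) ∣ D * cstar D →
  (j = m ∨ ¬ qPoly N ^ (j + 1) ∣ D * cstar Q ∨ ¬ qPoly N ^ (j + 1) ∣ cstar Q * D) →
  Fct (qPoly N ^ m * Q) D

theorem snoc0 {P D : Hq[X]} (p : Hq) (h : Fct P D) : Fct (P * (X - C p)) (D * (X - C p)) := by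
  have := Fct.snoc P D p 0 h (by simp) (by simp)
  simpa using this

theorem mulZ {N : ℝ[X]} {p : Hq} (hp : (X - C p) * (X - C (star p)) = qPoly N) {P D : Hq[X]}
    (h : Fct P D) : Fct (qPoly N * P) (qPoly N * D) := by
  have := snoc0 (star p) (snoc0 p h)
  rwa [mul_assoc, mul_assoc, hp, ← q_comm, ← q_comm] at this

theorem stepR {N : ℝ[X]} (hN : N.Monic) (h2 : N.natDegree = 2) {n : ℕ}
    (ih : ∀ n' < n, MainP N n') (m k j : ℕ) (Q D : Hq[X]) (hn : 2 * (m + 1) + k = n)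
    (hQ : Q.Monic) (hQn : Q * cstar Q = qPoly N ^ k) (hz : ¬ qPoly N ∣ Q)
    (hD : D.degree < (n : WithBot ℕ)) (hm : Q * cstar D + D * cstar Q = 0) (hj : j ≤ m + 1)
    (hDD : qPoly N ^ (m + 1 + j) ∣ D * cstar D) (hzD : ¬ qPoly N ∣ D)
    (hcase : (¬ qPoly N ^ (j + 1) ∣ D * cstar Q) ∨
      (j = m + 1 ∧ qPoly N ^ (m + 2) ∣ D * cstar Q ∧ qPoly N ^ (m + 2) ∣ cstar Q * D)) :
    Fct (qPoly N ^ (m + 1) * Q) D := by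
  have hZ0 := (q_monic hN).ne_zero
  obtain ⟨n, rfl⟩ : ∃ n', n = n' + 1 := ⟨n - 1, by omega⟩
  obtain ⟨p, E, hp, rfl⟩ := lemL hN h2 hzD
    ((dvd_pow_self _ (by omega)).trans hDD)
  have hp' := H5 hp
  have hE := H2 hD
  have hEE : qPoly N ^ (m + j) ∣ E * cstar E := by
    rw [H6 hp, show m + 1 + j = m + j + 1 by ring, pd_cancel hN] at hDD
    exact hDD
  by_cases hB : qPoly N ∣ Q * (X - C (star p))
  · -- B2
    obtain ⟨Q1, hQ1⟩ := hB
    have hQe : Q = Q1 * (X - C p) := by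
      apply mul_right_cancel₀ (monic_X_sub_C (star p)).ne_zero
      rw [hQ1, mul_assoc, hp, q_comm]
    clear hQ1
    subst hQe
    have hQ1 := H1 hQ
    have hk := H3 hN h2 hQn hQ
    rw [hQ1.natDegree_mul (monic_X_sub_C p), natDegree_X_sub_C] at hk
    obtain ⟨k, rfl⟩ : ∃ k', k = k' + 1 := ⟨k - 1, by omega⟩
    have hn1 : Q1 * cstar Q1 = qPoly N ^ k := by
      apply mul_left_cancel₀ hZ0
      rw [← H6 hp, hQn, pow_succ']
    have hz1 : ¬ qPoly N ∣ Q1 := fun h => hz (h.mul_right _)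
    have hEQ : E * (X - C p) * cstar (Q1 * (X - C p)) = qPoly N * (E * cstar Q1) := H6 hp _ _
    rcases hcase with hcase | ⟨rfl, hc1, hc2⟩
    · rw [hEQ, pd_cancel hN] at hcase
      obtain ⟨j, rfl⟩ : ∃ j', j = j' + 1 := by
        rcases j with _ | j
        · simp at hcase
        · exact ⟨j, rfl⟩
      rw [← mul_assoc]
      apply snoc0
      refine ih n (by omega) (m + 1) k j Q1 E (by omega) hQ1 hn1 hz1 hE ?_ (by omega) ?_
        (Or.inr (Or.inl hcase))
      · apply mul_left_cancel₀ hZ0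
        rw [mul_zero, mul_add, ← H6 hp, ← H6 hp, hm]
      · rwa [show m + 1 + j = m + (j + 1) by ring]
    · obtain ⟨d, hd0, hd1, hd2⟩ := exists_d p
      have hc := comm_d hd2
      have hc' : (X - C (star p)) * C d = C d * (X - C p) := by
        have := comm_d (p := star p) (d := d) (by rw [star_star]; exact comm_d' hd2)
        rwa [star_star] at this
      obtain ⟨F, hF⟩ : ∃ F, F = Q1 * C d * (X - C (star p)) := ⟨_, rfl⟩
      have hFY : F * (X - C p) = qPoly N * (Q1 * C d) := by rw [hF, mul_assoc, hp', q_comm]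
      obtain ⟨E', hE'⟩ : ∃ E', E' = E + qPoly N ^ m * F := ⟨_, rfl⟩
      have hDe : E * (X - C p) = E' * (X - C p) - qPoly N ^ (m + 1) * Q1 * C d := by
        rw [hE', add_mul, mul_assoc _ F, hFY, pow_succ]; noncomm_ring
      have hdeg : E'.degree < (n : WithBot ℕ) := by
        apply H2 (p := p)
        have : E' * (X - C p) = E * (X - C p) + qPoly N ^ (m + 1) * Q1 * C d := by rw [hDe]; abel
        rw [this]
        refine lt_of_le_of_lt (degree_add_le _ _) (max_lt hD ?_)
        refine lt_of_le_of_lt (degree_mul_le _ _) ?_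
        have hmon := ((q_monic hN).pow (m + 1)).mul hQ1
        rw [degree_eq_natDegree hmon.ne_zero, ((q_monic hN).pow (m + 1)).natDegree_mul hQ1,
          (q_monic hN).natDegree_pow, q_natDegree, h2]
        refine lt_of_le_of_lt (add_le_add_right degree_C_le _) ?_
        rw [add_zero]
        have : (m + 1) * 2 + Q1.natDegree < n + 1 := by omega
        exact_mod_cast this
      have hm1 : Q1 * cstar E' + E' * cstar Q1 = 0 := by
        apply H4 (w := N ^ (m + 1)) hN hp hd1 hd2
        rw [q_pow, ← hDe, hm]
      have key : Fct (qPoly N ^ (m + 1) * Q1) E' := by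
        refine ih n (by omega) (m + 1) k m Q1 E' (by omega) hQ1 hn1 hz1 hdeg hm1 (by omega) ?_
          (Or.inr (Or.inl ?_))
        · -- norm of E'
          obtain ⟨T, hT⟩ : ∃ T, T = E * cstar F + F * cstar E := ⟨_, rfl⟩
          have e1 : E' * cstar E' = E * cstar E + qPoly N ^ m * T +
              qPoly N ^ (m + m) * (F * cstar F) := by
            rw [hE', hT, ← q_pow, cs_add, cs_mul, cs_q, pow_add, ← q_pow, add_mul, mul_add, mul_add,
              ← q_comm, q_left, mul_assoc, mul_assoc, q_left]
            noncomm_ring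
          have e2 : F * cstar F = qPoly N * (Q1 * C d * cstar (Q1 * C d)) := by
            rw [hF, cs_mul _ (X - C (star p)), cs_lin, star_star, mul_assoc,
              ← mul_assoc (X - C (star p)), hp', q_left]
          have e3 : qPoly N ^ (m + 1) ∣ T := by
            obtain ⟨f, hf⟩ := q_real (A := T) (by
              rw [hT, cs_add, cs_mul, cs_mul, cs_cs, cs_cs, add_comm])
            -- `cstar F = - Y d Q1*`
            have f1 : E * cstar F = -(E * (X - C p) * C d * cstar Q1) := by
              rw [hF, cs_mul, cs_mul, cs_lin, cs_C, star_star, hd1, C_neg]; noncomm_ring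
            have f2 : F * cstar E = Q1 * C d * cstar (E * (X - C p)) := by
              rw [hF, cs_mul, cs_lin]; noncomm_ring
            have f3 : cstar (Q1 * (X - C p)) * T * (Q1 * (X - C p)) = qPoly N ^ (k + 1) * T := by
              rw [hf, ← q_comm, mul_assoc, self_comm, hQn, ← q_pow, q_comm]
            have f4 : cstar Q1 * (Q1 * (X - C p)) = qPoly N ^ k * (X - C p) := by
              rw [← mul_assoc, self_comm, hn1]
            have f5 : cstar (Q1 * (X - C p)) * Q1 = qPoly N ^ k * (X - C (star p)) := by
              rw [cs_mul, cs_lin, mul_assoc, self_comm, hn1, ← q_pow, q_comm]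
            have f6 : qPoly N ^ k * (qPoly N * T) = qPoly N ^ k *
                (-(cstar (Q1 * (X - C p)) * (E * (X - C p)) * (C d * (X - C p))) +
                (X - C (star p)) * C d * (cstar (E * (X - C p)) * (Q1 * (X - C p)))) := by
              rw [← mul_assoc, ← pow_succ, ← f3, hT, f1, f2, mul_add, add_mul]
              have g1 : cstar (Q1 * (X - C p)) * (-(E * (X - C p) * C d * cstar Q1)) *
                  (Q1 * (X - C p)) = qPoly N ^ k *
                  (-(cstar (Q1 * (X - C p)) * (E * (X - C p)) * (C d * (X - C p)))) := by
                calc _ = -(cstar (Q1 * (X - C p)) * (E * (X - C p)) * C d *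
                      (cstar Q1 * (Q1 * (X - C p)))) := by simp only [mul_neg, neg_mul, mul_assoc]
                  _ = _ := by
                    rw [f4, ← q_pow, q_left, mul_assoc _ (C d), mul_neg]
              have g2 : cstar (Q1 * (X - C p)) * (Q1 * C d * cstar (E * (X - C p))) *
                  (Q1 * (X - C p)) = qPoly N ^ k *
                  ((X - C (star p)) * C d * (cstar (E * (X - C p)) * (Q1 * (X - C p)))) := by
                calc _ = (cstar (Q1 * (X - C p)) * Q1) * (C d * cstar (E * (X - C p)) *
                      (Q1 * (X - C p))) := by simp only [mul_assoc]
                  _ = _ := by rw [f5]; simp only [mul_assoc]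
              rw [g1, g2, mul_add]
            have f7 := mul_left_cancel₀ (pow_ne_zero k hZ0) f6
            rw [← pd_cancel hN, f7]
            apply dvd_add
            · rw [dvd_neg]; exact hc2.mul_right _
            · apply pd_left
              rw [← pd_cs, cs_mul, cs_cs]; exact hc2
          rw [e1, e2]
          refine dvd_add (dvd_add ?_ ?_) ?_
          · rw [show m + 1 + m = m + (m + 1) by ring]; exact hEE
          · rw [show m + 1 + m = m + (m + 1) by ring, pow_add]; exact mul_dvd_mul_left _ e3
          · rw [← mul_assoc, ← pow_succ, show m + 1 + m = m + m + 1 by ring]; exact dvd_mul_right _ _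
        · -- not divisible
          intro hdiv
          rw [hEQ, pd_cancel hN] at hc1
          rw [hE', add_mul] at hdiv
          have h3 := (dvd_add_right hc1).1 hdiv
          rw [mul_assoc, pow_succ] at h3
          obtain ⟨B, hB⟩ := h3
          rw [mul_assoc] at hB
          have h4 := mul_left_cancel₀ (pow_ne_zero m hZ0) hB
          have h5 : qPoly N ∣ Q1 * (X - C p) * (C d * cstar Q1) := by
            refine ⟨B, ?_⟩
            rw [← h4, hF, mul_assoc Q1 (C d), ← hc]; simp only [mul_assoc]
          obtain ⟨Y, hY⟩ := prime_like (p := star p) hz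
            (by rw [mul_assoc, hp, ← q_comm]; exact dvd_mul_right _ _) h5
          have h6 : C d * (cstar Q1) = C d * ((X - C p) * C d⁻¹ * Y) := by
            rw [hY]
            simp only [← mul_assoc]
            rw [← hc', mul_assoc (X - C (star p)), (C_ne hd0).1, mul_one]
          have h7 := mul_left_cancel₀ (by simpa using hd0) h6
          have h8 := congrArg cstar h7
          rw [cs_cs, mul_assoc, cs_mul, cs_lin] at h8
          apply hz
          rw [h8, mul_assoc, hp', ← q_comm]
          exact dvd_mul_right _ _
      have := Fct.snoc _ _ p d key hd1 hd2
      rw [← hDe, mul_assoc] at this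
      exact this
  · -- B1
    have hQ' : Q * (X - C (star p)) * (X - C p) = qPoly N * Q := by rw [mul_assoc, hp', q_comm]
    have e : qPoly N ^ (m + 1) * Q = qPoly N ^ m * (Q * (X - C (star p))) * (X - C p) := by
      rw [mul_assoc _ _ (X - C p), hQ', pow_succ, mul_assoc]
    rw [e]
    apply snoc0
    have hcs : cstar (Q * (X - C (star p))) = (X - C p) * cstar Q := by
      rw [cs_mul, cs_lin, star_star]
    have hEQ : E * cstar (Q * (X - C (star p))) = E * (X - C p) * cstar Q := by
      rw [hcs, mul_assoc]
    have hQm : (Q * (X - C (star p))).Monic := hQ.mul (monic_X_sub_C _)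
    have hQn' : Q * (X - C (star p)) * cstar (Q * (X - C (star p))) = qPoly N ^ (k + 1) := by
      rw [hcs, mul_assoc, ← mul_assoc (X - C (star p)), hp', q_left, hQn, pow_succ']
    have hm' : Q * (X - C (star p)) * cstar E + E * cstar (Q * (X - C (star p))) = 0 := by
      rw [hEQ, ← hm, cs_mul, cs_lin, mul_assoc]
    rcases Nat.lt_or_ge j (m + 1) with hlt | hge
    · have hcase' : ¬ qPoly N ^ (j + 1) ∣ E * (X - C p) * cstar Q := by
        rcases hcase with h | h
        · exact h
        · omega
      refine ih n (by omega) m (k + 1) j _ E (by omega) hQm hQn' hB hE hm' (by omega) hEE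
        (Or.inr (Or.inl ?_))
      rw [hEQ]; exact hcase'
    · refine ih n (by omega) m (k + 1) m _ E (by omega) hQm hQn' hB hE hm' (by omega) ?_
        (Or.inl rfl)
      exact (pow_dvd_pow _ (by omega)).trans hEE

theorem main_ind {N : ℝ[X]} (hN : N.Monic) (h2 : N.natDegree = 2) (hi : Irreducible N) :
    ∀ n, MainP N n := by
  intro n
  induction n using Nat.strong_induction_on with
  | _ n ih =>
  intro m k j Q D hn hQ hQn hz hD hm hj hDD hcase
  have hZ0 := (q_monic hN).ne_zero
  rcases m with _ | m
  · rw [pow_zero, one_mul]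
    apply generic hN h2 k Q D hQ hQn hz _ hm
    rwa [show n = k by omega] at hD
  by_cases hzD : qPoly N ∣ D
  · obtain ⟨E, rfl⟩ := hzD
    obtain ⟨p, hp⟩ := exists_root hN h2 hi
    rw [pow_succ', mul_assoc]
    apply mulZ hp
    rw [mul_assoc, q_left, pd_cancel hN, pd_cancel hN] at hcase
    obtain ⟨j, rfl⟩ : ∃ j', j = j' + 1 := by
      rcases j with _ | j
      · simp at hcase
      · exact ⟨j, rfl⟩
    refine ih (n - 2) (by omega) m k j Q E (by omega) hQ hQn hz ?_ ?_ (by omega) ?_ ?_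
    · obtain ⟨n, rfl⟩ : ∃ n', n = n' + 1 + 1 := ⟨n - 2, by omega⟩
      apply H2 (p := p)
      apply H2 (p := star p)
      rwa [mul_assoc, hp, ← q_comm]
    · apply mul_left_cancel₀ hZ0
      rw [mul_zero, ← hm, cs_mul, cs_q, ← q_comm, q_left, mul_add, mul_assoc]
    · rw [cs_mul, cs_q, ← q_comm, mul_assoc, q_left, show m + 1 + (j + 1) = m + j + 1 + 1 by ring,
        pd_cancel hN, pd_cancel hN] at hDD
      exact hDD
    · simpa using hcase
  · by_cases h1 : qPoly N ^ (j + 1) ∣ D * cstar Q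
    · by_cases h3 : qPoly N ^ (j + 1) ∣ cstar Q * D
      · have hjm : j = m + 1 := by simpa [h1, h3] using hcase
        subst hjm
        exact stepR hN h2 ih m k _ Q D hn hQ hQn hz hD hm hj hDD hzD (Or.inr ⟨rfl, h1, h3⟩)
      · have hm' : cstar Q * D + cstar D * Q = 0 := by
          have : qPoly N ^ k * (cstar Q * D + cstar D * Q) = 0 := by
            have e1 : cstar Q * (Q * cstar D + D * cstar Q) * Q =
                cstar Q * Q * (cstar D * Q) + cstar Q * D * (cstar Q * Q) := by noncomm_ring
            rw [hm, self_comm, hQn, ← q_pow, ← q_comm, mul_zero, zero_mul] at e1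
            rw [← q_pow, mul_add, add_comm, ← e1]
          exact (mul_eq_zero.1 this).resolve_left (pow_ne_zero _ hZ0)
        have := stepR hN h2 ih m k j (cstar Q) (cstar D) hn (cs_monic hQ)
          (by rw [cs_cs, self_comm, hQn]) (by rwa [q_dvd_cs']) (by rwa [cs_degree])
          (by rw [cs_cs, cs_cs, hm']) hj (by rwa [cs_cs, self_comm]) (by rwa [q_dvd_cs'])
          (Or.inl (by
            rw [cs_cs]
            intro h
            apply h3
            rw [eq_neg_of_add_eq_zero_left hm', dvd_neg]; exact h))
        have := this.cs
        rwa [cs_cs, cs_mul, cs_cs, ← q_pow, cs_q, ← q_comm, q_pow] at this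
    · exact stepR hN h2 ih m k _ Q D hn hQ hQn hz hD hm hj hDD hzD (Or.inl h1)
end
/-- Sufficiency in the primary norm case: if `c·g` divides `D·D*` then `M` admits a
factorization into monic linear motion polynomial factors. -/
theorem primary_sufficiency
    (n : ℕ) (c : ℝ[X]) (Q D : Hq[X]) (N : ℝ[X]) (M : DHq[X]) (g : ℝ[X])
    (hM : M = mp (qPoly c * Q) D)
    (hc : c.Monic) (hmonic : M.Monic) (hmotion : IsMotion M)
    (hred : ReducedD M) (hbdd : BoundedD M) (hQred : ReducedQ Q)
    (hdeg : M.natDegree = n)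
    (hN2 : N.natDegree = 2) (hNirr : Irreducible N)
    (hQnorm : qPoly (c ^ 2) * (Q * cstar Q) = qPoly (N ^ n))
    (hnorm : M * cstar M = dPoly (N ^ n))
    (hg : IsMrpf3 g c (cstar Q * D) (D * cstar Q))
    (hcg : RDvdQ (c * g) (D * cstar D)) :
    HasLinFact M := by
  subst hM
  -- normalise `N`
  obtain ⟨N0, hN0, hN02, hN0i, hpow⟩ : ∃ N0 : ℝ[X], N0.Monic ∧ N0.natDegree = 2 ∧
      Irreducible N0 ∧ ∃ l : ℝ, N = C l * N0 := by
    have hl : N.leadingCoeff ≠ 0 := leadingCoeff_ne_zero.2 hNirr.ne_zero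
    refine ⟨N * C N.leadingCoeff⁻¹, monic_mul_leadingCoeff_inv hNirr.ne_zero, ?_, ?_,
      N.leadingCoeff, ?_⟩
    · rw [natDegree_mul_C (inv_ne_zero hl), hN2]
    · have hu : IsUnit (C N.leadingCoeff⁻¹) := isUnit_C.2 (IsUnit.mk0 _ (inv_ne_zero hl))
      exact (irreducible_mul_isUnit hu).2 hNirr
    · rw [mul_comm N, ← mul_assoc, ← C_mul, mul_inv_cancel₀ hl, C_1, one_mul]
  obtain ⟨l, hl⟩ := hpow
  -- degrees of the components
  have hPn : ∀ i, (qPoly c * Q).coeff i = ((mp (qPoly c * Q) D).coeff i).fst := by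
    intro i; rw [mp_coeff]; simp
  have hDn : ∀ i, D.coeff i = ((mp (qPoly c * Q) D).coeff i).snd := by
    intro i; rw [mp_coeff]; simp
  have hlead : (mp (qPoly c * Q) D).coeff n = 1 := by rw [← hdeg]; exact hmonic
  have hbig : ∀ i, n < i → (mp (qPoly c * Q) D).coeff i = 0 := fun i hi =>
    coeff_eq_zero_of_natDegree_lt (by omega)
  have hDdeg : D.degree < (n : WithBot ℕ) := by
    rw [degree_lt_iff_coeff_zero]
    intro i hi
    rw [hDn]
    rcases hi.lt_or_eq with h | h
    · rw [hbig i h]; simp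
    · rw [← h, hlead]; simp
  have hP1 : (qPoly c * Q).coeff n = 1 := by rw [hPn, hlead]; simp
  have hPm : (qPoly c * Q).Monic := by
    refine monic_of_degree_le n ?_ hP1
    rw [degree_le_iff_coeff_zero]
    intro i hi
    rw [hPn, hbig i (by exact_mod_cast hi)]; simp
  have hcm := q_monic hc
  have hQm : Q.Monic := by
    unfold Monic at *
    rwa [leadingCoeff_mul, hcm, one_mul] at hPm
  -- the norm
  obtain ⟨f, hf⟩ := self_real Q
  have hfm : f.Monic := by
    have h1 : (qPoly f).Monic := by rw [← hf]; exact hQm.mul (cs_monic hQm)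
    unfold Monic at *
    rw [qPoly, leadingCoeff_map] at h1
    exact (algebraMap ℝ Hq).injective (by rw [h1, map_one])
  have hcf : c ^ 2 * f = N0 ^ n := by
    have h1 : c ^ 2 * f = N ^ n := by
      apply q_inj; rw [q_mul, ← hf, hQnorm]
    have h2 : (N ^ n).Monic := by rw [← h1]; exact (hc.pow 2).mul hfm
    have h3 : N ^ n = C (l ^ n) * N0 ^ n := by rw [hl, mul_pow, C_pow]
    have h4 : l ^ n = 1 := by
      have := h2.leadingCoeff
      rwa [h3, leadingCoeff_mul, (hN0.pow n).leadingCoeff, leadingCoeff_C, mul_one] at this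
    rw [h1, h3, h4, C_1, one_mul]
  have hprime := hN0i.prime
  have hpw : ∀ a : ℝ[X], a.Monic → a ∣ N0 ^ n → ∃ i, a = N0 ^ i := by
    intro a ha hd
    obtain ⟨i, _, hi⟩ := (dvd_prime_pow hprime n).1 hd
    exact ⟨i, eq_of_monic_of_associated ha (hN0.pow i) hi⟩
  obtain ⟨m, rfl⟩ := hpw c hc ⟨c * f, by rw [← hcf]; ring⟩
  obtain ⟨k, rfl⟩ := hpw f hfm ⟨_, by rw [← hcf, mul_comm]⟩
  have hmk : 2 * m + k = n := by
    have := congrArg natDegree hcf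
    rw [← pow_mul, ← pow_add, hN0.natDegree_pow, hN0.natDegree_pow, hN02] at this
    omega
  have hz : ¬ qPoly N0 ∣ Q := by
    intro h
    have := hQred N0 hN0 h
    rw [this] at hN02; simp at hN02
  obtain ⟨hgm, hgc, -, -, hgmax⟩ := hg
  obtain ⟨j, rfl⟩ := hpw g hgm (hgc.trans ⟨N0 ^ m * N0 ^ k, by rw [← hcf]; ring⟩)
  have hpd : ∀ a b : ℕ, N0 ^ a ∣ N0 ^ b → a ≤ b := by
    intro a b h
    exact (pow_dvd_pow_iff hprime.ne_zero hprime.not_isUnit).1 h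
  have hjm := hpd _ _ hgc
  have hmot : Q * cstar D + D * cstar Q = 0 := by
    rw [mp_cs, mp_mul, dPoly_eq] at hnorm
    have := (mp_inj hnorm).2
    rw [cs_mul, cs_q, ← q_comm, mul_assoc, q_left, ← mul_add] at this
    exact (mul_eq_zero.1 this).resolve_left hcm.ne_zero
  apply Fct.has
  rw [q_pow]
  refine main_ind hN0 hN02 hN0i n m k j Q D hmk hQm (by rw [hf, q_pow]) hz hDdeg hmot hjm ?_ ?_
  · rw [← q_pow, pow_add]; exact hcg
  · by_contra hcon
    push Not at hcon
    obtain ⟨h1, h2, h3⟩ := hcon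
    have := hgmax (N0 ^ (j + 1)) (hN0.pow _) (pow_dvd_pow _ (by omega))
      (by rw [← q_pow] at h3; exact h3) (by rw [← q_pow] at h2; exact h2)
    have := hpd _ _ this
    omega
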